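/- If a subshift X ⊆ Σ^G with safe symbol 0 is an SFT, then X is uniformly avo for the family of all subsets of G \ {e}: there is a single radius r such that for every C ⊆ G \ {e}, the set C ∩ B_r is determining for C. -/

import Mathlib

open scoped Pointwise

/-- `B` is a determining set for `C`. -/
def IsDetermining {G A : Type*} [Group G] (X : Set (G → A)) (C B : Set G) : Prop :=
  ∀ x : G → A, (∃ w ∈ X, ∀ g ∈ C, w g = x g) →
    ∀ a : A, (∃ w ∈ X, (∀ g ∈ B, w g = x g) ∧ w 1 = a) ↔
      (∃ w ∈ X, (∀ g ∈ C, w g = x g) ∧ w 1 = a)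

/-!
Given `x` on `C`, erase everything outside `C` to the safe symbol and write `a` at the identity. The
resulting configuration is valid because every translated window `g • D i` sees a valid one. A
window through the identity lies in `F = ⋃ i, (D i)⁻¹ * D i`, where it sees a valid extension of `x`
on `C ∩ F` with `a` at the identity, erased outside `C ∪ {1}`; any other window sees a valid
extension of `x` on `C`, erased outside `C`.
-/

/-- The symbol `z` is safe for `X`: replacing any of the symbols of a configuration in `X` by `z`
gives a configuration in `X`. -/
def IsSafeSymbol {I A : Type*} (X : Set (I → A)) (z : A) : Prop :=
  ∀ y : I → A, (∃ x ∈ X, ∀ i, y i = x i ∨ y i = z) → y ∈ X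

/-- The set of configurations in which no translate of a pattern `p i` on the window `D i` occurs;
only the values of `p i` on `D i` matter. It is a subshift of finite type when `G` is a group and
there are finitely many windows, each finite. In contrast with
`SymbolicDynamics.FullShift.mulForbidden`, the windows may be infinite, and `A` need not be
inhabited. -/
def forbiddenShift {ι G A : Type*} [Mul G] (D : ι → Set G) (p : ι → G → A) : Set (G → A) :=
  {x | ∀ g i, ∃ h ∈ D i, x (g * h) ≠ p i h}

open scoped Classical in
theorem IsSafeSymbol.piecewise_mem {I A : Type*} {X : Set (I → A)} {z : A}
    (hz : IsSafeSymbol X z) {x : I → A} (hx : x ∈ X) (C : Set I) :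
    C.piecewise x (fun _ => z) ∈ X :=
  hz _ ⟨x, hx, fun i => by by_cases hi : i ∈ C <;> simp [hi]⟩

theorem smul_subset_inv_mul_of_one_mem {G : Type*} [Group G] {g : G} {W : Set G}
    (h : 1 ∈ g • W) : g • W ⊆ W⁻¹ * W := by
  obtain ⟨k, hk, hgk⟩ := h
  rw [eq_inv_of_mul_eq_one_left hgk]
  exact Set.smul_set_subset_mul (Set.inv_mem_inv.mpr hk)

theorem exists_subset_pow_of_finite {M : Type*} [Monoid M] {S F : Set M} (hS : 1 ∈ S)
    (hF : F.Finite) (hgen : ∀ g ∈ F, ∃ n : ℕ, g ∈ S ^ n) : ∃ r : ℕ, F ⊆ S ^ r := by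
  refine ((Filter.eventually_all_finite hF).mpr fun g hg => ?_ : ∀ᶠ r in Filter.atTop, _).exists
  obtain ⟨n, hn⟩ := hgen g hg
  exact (Filter.eventually_ge_atTop n).mono fun r hr => Set.pow_subset_pow_right hS hr hn

theorem mem_forbiddenShift_of_eqOn_windows {ι G A : Type*} [Mul G] {D : ι → Set G}
    {p : ι → G → A} {y : G → A}
    (h : ∀ (g : G) (i : ι), ∃ w ∈ forbiddenShift D p, Set.EqOn y w (g • D i)) :
    y ∈ forbiddenShift D p := by
  intro g i
  obtain ⟨w, hw, hyw⟩ := h g i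
  obtain ⟨k, hk, hne⟩ := hw g i
  exact ⟨k, hk, (hyw (Set.smul_mem_smul_set hk)).trans_ne hne⟩

section ForbiddenShift

variable {ι G A : Type*} [Group G] {D : ι → Set G} {p : ι → G → A} {z : A} {C F : Set G}

open scoped Classical in
theorem IsSafeSymbol.update_piecewise_mem_forbiddenShift
    (hz : IsSafeSymbol (forbiddenShift D p) z) (hF : ⋃ i, (D i)⁻¹ * D i ⊆ F) {u w : G → A}
    (hu : u ∈ forbiddenShift D p) (hw : w ∈ forbiddenShift D p) (huw : Set.EqOn u w (C ∩ F)) :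
    Function.update (C.piecewise u fun _ => z) 1 (w 1) ∈ forbiddenShift D p := by
  refine mem_forbiddenShift_of_eqOn_windows fun g i => ?_
  by_cases h1 : 1 ∈ g • D i
  · have hDF : g • D i ⊆ F :=
      (smul_subset_inv_mul_of_one_mem h1).trans ((Set.subset_iUnion _ i).trans hF)
    refine ⟨_, hz.piecewise_mem hw (insert 1 C), fun k hk => ?_⟩
    obtain rfl | hk1 := eq_or_ne k 1
    · simp
    by_cases hkC : k ∈ C
    · simpa [hk1, hkC] using huw ⟨hkC, hDF hk⟩
    · simp [hk1, hkC]
  · refine ⟨_, hz.piecewise_mem hu C, fun k hk => ?_⟩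
    exact Function.update_of_ne (ne_of_mem_of_not_mem hk h1) _ _

theorem safe_symbol_SFT_uniformly_avo_general (hz : IsSafeSymbol (forbiddenShift D p) z)
    (hF : ⋃ i, (D i)⁻¹ * D i ⊆ F) (hC : 1 ∉ C) :
    IsDetermining (forbiddenShift D p) C (C ∩ F) := by
  classical
  rintro x ⟨u, hu, hux⟩ a
  constructor
  · rintro ⟨w, hw, hwx, rfl⟩
    have huw : Set.EqOn u w (C ∩ F) := fun g hg => (hux g hg.1).trans (hwx g hg).symm
    refine ⟨_, hz.update_piecewise_mem_forbiddenShift hF hu hw huw, fun g hg => ?_,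
      Function.update_self ..⟩
    rw [Function.update_of_ne (ne_of_mem_of_not_mem hg hC), Set.piecewise_eq_of_mem _ _ _ hg,
      hux g hg]
  · rintro ⟨w, hw, hwx, hwa⟩
    exact ⟨w, hw, fun g hg => hwx g hg.1, hwa⟩

end ForbiddenShift

/-- If a subshift `X ⊆ A^G` with safe symbol `z` is an SFT, then `X` is uniformly avo
for the family of all subsets of `G \ {e}`: there is a single radius `r` such that for
every `C ⊆ G \ {e}`, the set `C ∩ B_r` is determining for `C`. Here `S` is a finite
symmetric generating set containing the identity, and `S ^ r` is the `r`-ball of the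
word metric. -/
theorem safe_symbol_SFT_uniformly_avo {G A : Type*} [Group G] [Finite A]
    [TopologicalSpace A] [DiscreteTopology A]
    (S : Set G) (hS1 : (1 : G) ∈ S) (hSinv : S⁻¹ = S) (hSfin : S.Finite)
    (hSgen : ∀ g : G, ∃ n : ℕ, g ∈ S ^ n)
    (X : Set (G → A)) (hclosed : IsClosed X)
    (hshift : ∀ g : G, ∀ x ∈ X, (fun h => x (g⁻¹ * h)) ∈ X)
    (z : A) (hsafe : ∀ y : G → A, (∃ x ∈ X, ∀ g : G, y g = x g ∨ y g = z) → y ∈ X)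
    (hSFT : ∃ (n : ℕ) (D : Fin n → Finset G) (p : Fin n → G → A),
      X = {x : G → A | ∀ (g : G) (i : Fin n), ∃ h ∈ D i, x (g * h) ≠ p i h}) :
    ∃ r : ℕ, ∀ C : Set G, (1 : G) ∉ C → IsDetermining X C (C ∩ S ^ r) := by
  obtain ⟨n, D, p, rfl⟩ := hSFT
  have hfin : (⋃ i, (D i : Set G)⁻¹ * (D i : Set G)).Finite :=
    Set.finite_iUnion fun i => (D i).finite_toSet.inv.mul (D i).finite_toSet
  obtain ⟨r, hr⟩ := exists_subset_pow_of_finite hS1 hfin fun g _ => hSgen g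
  exact ⟨r, fun C hC => safe_symbol_SFT_uniformly_avo_general hsafe hr hC⟩
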